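/- Fix a positive integer d, and define g : 𝕋^{φ(d)} → ℂ by g(z_1,…,z_{φ(d)}) = Σ_{k=0}^{d−1} ∏_{j=0}^{φ(d)−1} z_{j+1}^{b_{k,j}}, where 𝕋 is the unit circle and the integers b_{k,j} are determined by t^k ≡ Σ_{j=0}^{φ(d)−1} b_{k,j} t^j (mod Φ_d(t)) in ℤ[t]. Then for every ε > 0 there exists an odd prime power q = p^a with d dividing p−1 such that, letting A be the unique subgroup of order d of the cyclic group (ℤ/qℤ)^× and X = A·1, every point of the image of g lies within distance ε of some value σ_X(y), y ∈ ℤ/qℤ; i.e., every open ball of radius ε centered at a point of the image of g has nonempty intersection with the image of σ_X. -/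

import Mathlib

/-!
Write `σ_X(y) = g(v/q)`, where `v = (y, y w, …, y w ^ (φ(d) - 1))` and `w` generates `A`. As `g` is
continuous on a compact torus, it is enough that the vectors `v/q` become dense in `(ℝ/ℤ) ^ φ(d)`
as `q → ∞`. Replace `ℤ[ζ_d]` by any domain `R` with a finite `ℤ`-basis `B`, and `w` by a ring
homomorphism `ψ : R → ℤ/q`; the integer lifts of the vectors `(y ψ(B j))_j` form a lattice. By the
pigeonhole principle it contains a nonzero vector that is short compared with `q`, that is, the
values on `B` of a nonzero linear form `φ : R → ℤ` congruent to `y₀ ψ`. The vectors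
`(φ(B i * B j))_j` are again short lattice vectors, and they are linearly independent because
`(x, z) ↦ φ(x z)` is nondegenerate on a domain. Rounding coordinates with respect to them moves
any point of `ℝ^ι` to the lattice by a distance small compared with `q`.
-/

open Complex

/-- `e(θ) = exp(2πiθ)`. -/
noncomputable def e2 (θ : ℝ) : ℂ := Complex.exp (2 * Real.pi * Complex.I * θ)

/-- The cyclic supercharacter attached to a subset `X` of `ℤ/nℤ`:
`σ_X(y) = Σ_{x ∈ X} e(xy/n)`. -/
noncomputable def superchar (n : ℕ) (X : Set (ZMod n)) (y : ZMod n) : ℂ :=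
  ∑ᶠ x ∈ X, e2 (((x.val * y.val : ℕ) : ℝ) / (n : ℝ))

/-- The orbit `Ar = {ar : a ∈ A}` of `r` under a unit subgroup `A`. -/
def unitOrbit (n : ℕ) (A : Subgroup (ZMod n)ˣ) (r : ZMod n) : Set (ZMod n) :=
  (fun a : (ZMod n)ˣ => (a : ZMod n) * r) '' (A : Set (ZMod n)ˣ)


open Filter Matrix Module
open scoped Polynomial

section LinearForms

variable {A R : Type*} [CommRing A] [IsDomain A] [CommRing R] [IsDomain R] [Algebra A R]

lemma eq_zero_of_forall_apply_mul_eq_zero [Algebra.IsAlgebraic A R] {φ : R →ₗ[A] A} (hφ : φ ≠ 0)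
    {x : R} (hx : ∀ y, φ (x * y) = 0) : x = 0 := by
  by_contra hx0
  obtain ⟨r, hr, s, hs⟩ := (Algebra.IsAlgebraic.isAlgebraic (R := A) x).exists_nonzero_dvd
    (mem_nonZeroDivisors_of_ne_zero hx0)
  refine hφ (LinearMap.ext fun y ↦ (mul_eq_zero.1 ?_).resolve_left hr)
  calc r * φ y = φ (x * (s * y)) := by
        rw [← mul_assoc, ← hs, ← Algebra.smul_def, map_smul, smul_eq_mul]
    _ = 0 := hx _

lemma det_apply_basis_mul_ne_zero {ι : Type*} [Fintype ι] [DecidableEq ι] (B : Basis ι A R)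
    {φ : R →ₗ[A] A} (hφ : φ ≠ 0) : (Matrix.of fun i j ↦ φ (B i * B j)).det ≠ 0 := by
  have : Module.Finite A R := .of_basis B
  have hform : ((LinearMap.mul A R).compr₂ φ).SeparatingLeft := fun _ hx ↦
    eq_zero_of_forall_apply_mul_eq_zero hφ hx
  have hsymm : ((LinearMap.mul A R).compr₂ φ).IsRefl := fun x y h ↦ by
    simpa [mul_comm] using h
  have hdet := (LinearMap.BilinForm.nondegenerate_iff_det_ne_zero B).1
    (hsymm.nondegenerate_iff_separatingLeft.2 hform)
  convert hdet using 2
  ext i j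
  simp [LinearMap.BilinForm.toMatrix_apply]

end LinearForms

section Lattice

variable {ι : Type*} [Fintype ι]

lemma exists_int_vecMul_abs_sub_le [DecidableEq ι] {H : Matrix ι ι ℝ} (hH : H.det ≠ 0) (t : ι → ℝ) :
    ∃ c : ι → ℤ, ∀ j, |t j - ((fun i ↦ (c i : ℝ)) ᵥ* H) j| ≤ ∑ i, |H i j| := by
  set s := t ᵥ* H⁻¹ with hs
  have ht : t = s ᵥ* H := by
    rw [hs, vecMul_vecMul, nonsing_inv_mul _ hH.isUnit, vecMul_one]
  refine ⟨fun i ↦ ⌊s i⌋, fun j ↦ ?_⟩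
  calc |t j - ((fun i ↦ (⌊s i⌋ : ℝ)) ᵥ* H) j| = |∑ i, Int.fract (s i) * H i j| := by
        simp only [ht, vecMul, dotProduct, ← Finset.sum_sub_distrib, ← sub_mul, Int.self_sub_floor]
    _ ≤ ∑ i, |Int.fract (s i) * H i j| := Finset.abs_sum_le_sum_abs _ _
    _ ≤ ∑ i, |H i j| := Finset.sum_le_sum fun i _ ↦ by
        rw [abs_mul, Int.abs_fract]
        exact mul_le_of_le_one_left (abs_nonneg _) (Int.fract_lt_one _).le

lemma exists_ne_zero_forall_abs_lt_of_pow_lt {q : ℕ} {η : ℝ} (hη : 0 < η)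
    (hq : ⌈1 / η⌉₊ ^ Fintype.card ι < q) (v : ι → ZMod q) :
    ∃ y : ZMod q, y ≠ 0 ∧ ∃ a : ι → ℤ, ∀ j, (a j : ZMod q) = y * v j ∧ |(a j : ℝ)| < q * η := by
  obtain ⟨m, m', hne, hm⟩ := AbsoluteValue.absIsAdmissible.exists_approx hη
    (Int.natCast_ne_zero.2 (Nat.ne_zero_of_lt hq)) fun i j ↦ (i : ℤ) * (v j).cast
  refine ⟨(m' : ℕ) - (m : ℕ), sub_ne_zero.2 fun h ↦ hne (Fin.ext ?_),
    fun j ↦ m' * (v j).cast % q - m * (v j).cast % q, fun j ↦ ⟨?_, ?_⟩⟩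
  · exact (CharP.natCast_injOn_Iio (ZMod q) q (m'.is_lt.trans_le hq)
      (m.is_lt.trans_le hq) h).symm
  · push_cast [ZMod.intCast_mod, ZMod.intCast_zmod_cast]
    ring
  · simpa using hm j

end Lattice

section Density

variable {ι R : Type*} [Fintype ι] [CommRing R]

/-- The `ℓ¹` norm of the structure constants of the multiplication of `R` in the basis `B`: it
controls the size of a linear form on the products `B i * B j` in terms of its size on `B`. -/
noncomputable def structureConstNorm (B : Basis ι ℤ R) : ℝ :=
  ∑ j, ∑ i, ∑ l, |(B.repr (B i * B j) l : ℝ)|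

lemma structureConstNorm_nonneg (B : Basis ι ℤ R) : 0 ≤ structureConstNorm B := by
  unfold structureConstNorm
  positivity

lemma sum_abs_apply_basis_mul_le (B : Basis ι ℤ R) {φ : R →ₗ[ℤ] ℤ} {c : ℝ}
    (hφ : ∀ l, |(φ (B l) : ℝ)| ≤ c) (j : ι) :
    ∑ i, |(φ (B i * B j) : ℝ)| ≤ structureConstNorm B * c := by
  have hexpand (x : R) : (φ x : ℝ) = ∑ l, (B.repr x l : ℝ) * φ (B l) := by
    conv_lhs => rw [← B.sum_repr x, map_sum]
    simp only [map_smul, smul_eq_mul, Int.cast_sum, Int.cast_mul]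
  have hbound (x : R) : |(φ x : ℝ)| ≤ (∑ l, |(B.repr x l : ℝ)|) * c := by
    rw [hexpand, Finset.sum_mul]
    refine (Finset.abs_sum_le_sum_abs _ _).trans (Finset.sum_le_sum fun l _ ↦ ?_)
    rw [abs_mul]
    exact mul_le_mul_of_nonneg_left (hφ l) (abs_nonneg _)
  have hc : 0 ≤ c := (abs_nonneg _).trans (hφ j)
  calc ∑ i, |(φ (B i * B j) : ℝ)| ≤ (∑ i, ∑ l, |(B.repr (B i * B j) l : ℝ)|) * c := by
        rw [Finset.sum_mul]
        exact Finset.sum_le_sum fun i _ ↦ hbound _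
    _ ≤ structureConstNorm B * c := mul_le_mul_of_nonneg_right
        (Finset.single_le_sum (f := fun j ↦ ∑ i, ∑ l, |(B.repr (B i * B j) l : ℝ)|)
          (fun _ _ ↦ by positivity) (Finset.mem_univ j)) hc

lemma exists_linearForm_ne_zero_abs_lt (B : Basis ι ℤ R) {q : ℕ} {η : ℝ} (hη : 0 < η)
    (hq : ⌈1 / η⌉₊ ^ Fintype.card ι < q) (ψ : R →+* ZMod q) :
    ∃ φ : R →ₗ[ℤ] ℤ, φ ≠ 0 ∧ (∃ y : ZMod q, ∀ x, (φ x : ZMod q) = y * ψ x) ∧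
      ∀ l, |(φ (B l) : ℝ)| < q * η := by
  obtain ⟨y, hy, a, ha⟩ := exists_ne_zero_forall_abs_lt_of_pow_lt hη hq fun l ↦ ψ (B l)
  have hφ : (Int.castAddHom (ZMod q)).toIntLinearMap ∘ₗ B.constr ℤ a =
      ((AddMonoidHom.mulLeft y).comp ψ.toAddMonoidHom).toIntLinearMap :=
    B.ext fun l ↦ by simpa [B.constr_basis, -Basis.constr_apply_fintype] using (ha l).1
  replace hφ (x : R) : (B.constr ℤ a x : ZMod q) = y * ψ x := LinearMap.congr_fun hφ x
  refine ⟨B.constr ℤ a, fun h ↦ hy ?_, ⟨y, hφ⟩, fun l ↦ by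
    simpa only [B.constr_basis] using (ha l).2⟩
  simpa [h] using (hφ 1).symm

lemma exists_intCast_eq_mul_abs_sub_le [IsDomain R] (B : Basis ι ℤ R) {q : ℕ} {η : ℝ}
    (hη : 0 < η) (hq : ⌈1 / η⌉₊ ^ Fintype.card ι < q) (ψ : R →+* ZMod q) (t : ι → ℝ) :
    ∃ y : ZMod q, ∃ N : ι → ℤ, ∀ j, (N j : ZMod q) = y * ψ (B j) ∧
      |t j - N j| ≤ structureConstNorm B * (q * η) := by
  classical
  obtain ⟨φ, hφ0, ⟨y, hy⟩, hφ⟩ := exists_linearForm_ne_zero_abs_lt B hη hq ψ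
  set H : Matrix ι ι ℤ := Matrix.of fun i j ↦ φ (B i * B j) with hH
  have hdet : (H.map (Int.castRingHom ℝ)).det ≠ 0 := by
    rw [← RingHom.mapMatrix_apply, ← RingHom.map_det]
    simpa using det_apply_basis_mul_ne_zero B hφ0
  obtain ⟨c, hc⟩ := exists_int_vecMul_abs_sub_le hdet t
  refine ⟨y * ψ (∑ i, c i • B i), c ᵥ* H, fun j ↦ ⟨?_, ?_⟩⟩
  · calc ((c ᵥ* H) j : ZMod q) = ∑ i, c i * (y * ψ (B i * B j)) := by
          simp [vecMul, dotProduct, hH, hy]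
      _ = y * ψ (∑ i, c i • B i) * ψ (B j) := by
          simp only [map_sum, map_mul, zsmul_eq_mul, map_intCast, Finset.mul_sum, Finset.sum_mul]
          exact Finset.sum_congr rfl fun i _ ↦ by ring
  · have hcast : ((c ᵥ* H) j : ℝ) = ((fun i ↦ (c i : ℝ)) ᵥ* H.map (Int.castRingHom ℝ)) j := by
      simp [vecMul, dotProduct]
    rw [hcast]
    exact (hc j).trans (sum_abs_apply_basis_mul_le B (fun l ↦ (hφ l).le) j)

theorem eventually_exists_dist_toAddCircle_lt [IsDomain R] (B : Basis ι ℤ R) {δ : ℝ} (hδ : 0 < δ) :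
    ∀ᶠ q : ℕ in atTop, ∀ [NeZero q] (ψ : R →+* ZMod q) (θ : ι → UnitAddCircle),
      ∃ y : ZMod q, dist θ (fun j ↦ ZMod.toAddCircle (y * ψ (B j))) < δ := by
  set C := structureConstNorm B
  have hC : 0 ≤ C := structureConstNorm_nonneg B
  have hη : 0 < δ / (C + 1) := by positivity
  filter_upwards [eventually_gt_atTop (⌈1 / (δ / (C + 1))⌉₊ ^ Fintype.card ι)] with q hq _ ψ θ
  have hq0 : (0 : ℝ) < q := by exact_mod_cast Nat.pos_of_neZero q
  choose t ht using fun j ↦ QuotientAddGroup.mk_surjective (θ j)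
  obtain ⟨y, N, hN⟩ := exists_intCast_eq_mul_abs_sub_le B hη hq ψ fun j ↦ q * t j
  refine ⟨y, (dist_pi_lt_iff hδ).2 fun j ↦ ?_⟩
  rw [← (hN j).1, ZMod.toAddCircle_intCast, ← ht j, dist_eq_norm]
  calc ‖((t j : ℝ) : UnitAddCircle) - ((N j / q : ℝ) : UnitAddCircle)‖
      ≤ |t j - N j / q| := QuotientAddGroup.norm_mk_le_norm (m := t j - N j / q)
    _ = |q * t j - N j| / q := by rw [← abs_of_pos hq0, ← abs_div, abs_of_pos hq0]; field_simp
    _ ≤ C * (q * (δ / (C + 1))) / q := by gcongr; exact (hN j).2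
    _ = C / (C + 1) * δ := by field_simp
    _ < δ := mul_lt_of_lt_one_left hδ ((div_lt_one (by positivity)).2 (lt_add_one C))

end Density

section LaurentSum

variable {ι κ : Type*} [Fintype ι] [Fintype κ]

/-- The sum of Laurent monomials `∑ k, ∏ j, z j ^ b k j`: the map `g` of the theorem, for an
arbitrary matrix of exponents. -/
noncomputable def laurentSum (b : κ → ι → ℤ) (z : ι → ℂ) : ℂ :=
  ∑ k, ∏ j, z j ^ b k j

lemma continuous_laurentSum_toCircle (b : κ → ι → ℤ) :
    Continuous fun θ : ι → UnitAddCircle ↦ laurentSum b fun j ↦ (θ j).toCircle :=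
  continuous_finsetSum _ fun _ _ ↦ continuous_finsetProd _ fun j _ ↦
    (continuous_subtype_val.comp (AddCircle.continuous_toCircle.comp (continuous_apply j))).zpow₀ _
      fun _ ↦ .inl (Circle.coe_ne_zero _)

lemma laurentSum_addChar {G : Type*} [AddCommGroup G] (χ : AddChar G ℂ) (b : κ → ι → ℤ)
    (v : ι → G) : laurentSum b (fun j ↦ χ (v j)) = ∑ k, χ (∑ j, b k j • v j) := by
  have hχ (x : ι → G) : ∏ j, χ (x j) = χ (∑ j, x j) :=
    (map_prod χ.toMonoidHom (fun j ↦ .ofAdd (x j)) _).symm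
  simp only [laurentSum, ← hχ, AddChar.map_zsmul_eq_zpow]

theorem eventually_exists_norm_laurentSum_sub_lt {R : Type*} [CommRing R] [IsDomain R]
    (B : Basis ι ℤ R) (b : κ → ι → ℤ) {ε : ℝ} (hε : 0 < ε) :
    ∀ᶠ q : ℕ in atTop, ∀ [NeZero q] (ψ : R →+* ZMod q) (z : ι → ℂ), (∀ j, ‖z j‖ = 1) →
      ∃ y : ZMod q,
        ‖laurentSum b z - ∑ k, ZMod.stdAddChar (y * ψ (∑ j, b k j • B j))‖ < ε := by
  obtain ⟨δ, hδ, hclose⟩ := Metric.uniformContinuous_iff.1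
    (CompactSpace.uniformContinuous_of_continuous (continuous_laurentSum_toCircle b)) ε hε
  filter_upwards [eventually_exists_dist_toAddCircle_lt B hδ] with q hq _ ψ z hz
  have hθ (j : ι) : ∃ θ : UnitAddCircle, (θ.toCircle : ℂ) = z j := by
    obtain ⟨θ, hθ⟩ := (AddCircle.homeomorphCircle one_ne_zero).surjective
      ⟨z j, mem_sphere_zero_iff_norm.2 (hz j)⟩
    exact ⟨θ, by rw [← AddCircle.homeomorphCircle_apply one_ne_zero, hθ]⟩
  choose θ hθ using hθ
  obtain ⟨y, hy⟩ := hq ψ θ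
  have hsum : laurentSum b (fun j ↦ ((ZMod.toAddCircle (y * ψ (B j))).toCircle : ℂ)) =
      ∑ k, ZMod.stdAddChar (y * ψ (∑ j, b k j • B j)) := by
    refine (laurentSum_addChar ZMod.stdAddChar b fun j ↦ y * ψ (B j)).trans ?_
    simp only [map_sum, map_zsmul, Finset.mul_sum, mul_smul_comm]
  refine ⟨y, ?_⟩
  rw [← hsum, ← dist_eq_norm, ← funext hθ]
  exact hclose hy

theorem eventually_exists_norm_laurentSum_sub_lt_of_aeval_eq_zero {f : ℤ[X]} (hf : f.Monic)
    (hprime : Prime f) {n : ℕ} (hn : f.natDegree = n) (b : κ → Fin n → ℤ) {ε : ℝ} (hε : 0 < ε) :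
    ∀ᶠ q : ℕ in atTop, ∀ [NeZero q] (w : ZMod q), Polynomial.aeval w f = 0 →
      ∀ z : Fin n → ℂ, (∀ j, ‖z j‖ = 1) → ∃ y : ZMod q,
        ‖laurentSum b z - ∑ k, ZMod.stdAddChar (y * ∑ j, b k j * w ^ (j : ℕ))‖ < ε := by
  subst hn
  have := AdjoinRoot.isDomain_of_prime hprime
  let B : Basis (Fin f.natDegree) ℤ (AdjoinRoot f) := (AdjoinRoot.powerBasis' hf).basis
  have hB (j : Fin f.natDegree) : B j = AdjoinRoot.root f ^ (j : ℕ) :=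
    (AdjoinRoot.powerBasis' hf).basis_eq_pow j
  filter_upwards [eventually_exists_norm_laurentSum_sub_lt B b hε] with q hq _ w hw z hz
  replace hw : f.eval₂ (Int.castRingHom (ZMod q)) w = 0 := hw
  obtain ⟨y, hy⟩ := hq (AdjoinRoot.lift (Int.castRingHom (ZMod q)) w hw) z hz
  exact ⟨y, by simpa [hB] using hy⟩

end LaurentSum

lemma pow_eq_sum_of_X_pow_modByMonic_eq {A S : Type*} [CommRing A] [CommRing S] [Algebra A S]
    {f : A[X]} {w : S} (hw : Polynomial.aeval w f = 0) {k n : ℕ} {c : Fin n → A}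
    (hc : Polynomial.X ^ k %ₘ f = ∑ j, Polynomial.C (c j) * Polynomial.X ^ (j : ℕ)) :
    w ^ k = ∑ j, algebraMap A S (c j) * w ^ (j : ℕ) := by
  have h := Polynomial.aeval_modByMonic_eq_self_of_root (p := Polynomial.X ^ k) hw
  rw [hc] at h
  simpa using h.symm

section Supercharacter

variable {n : ℕ}

lemma unitOrbit_zpowers (u : (ZMod n)ˣ) (r : ZMod n) :
    unitOrbit n (.zpowers u) r =
      Set.range fun k : Fin (orderOf u) ↦ (u : ZMod n) ^ (k : ℕ) * r := by
  classical
  ext x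
  simp only [unitOrbit, Set.mem_image, SetLike.mem_coe, Set.mem_range, Fin.exists_iff,
    mem_zpowers_iff_mem_range_orderOf, Finset.mem_image, Finset.mem_range]
  simp

variable [NeZero n]

lemma superchar_eq_finsum_stdAddChar (S : Set (ZMod n)) (y : ZMod n) :
    superchar n S y = ∑ᶠ x ∈ S, ZMod.stdAddChar (y * x) := by
  refine finsum_mem_congr rfl fun x _ ↦ ?_
  have hxy : y * x = ((x.val * y.val : ℕ) : ℤ) := by
    push_cast [ZMod.natCast_zmod_val]
    exact mul_comm y x
  rw [hxy, ZMod.stdAddChar_coe, e2]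
  push_cast
  rw [← mul_div_assoc]

lemma exists_isPrimitiveRoot_superchar_eq_sum (A : Subgroup (ZMod n)ˣ) [IsCyclic A] :
    ∃ w : ZMod n, IsPrimitiveRoot w (Nat.card A) ∧ ∀ y,
      superchar n (unitOrbit n A 1) y =
        ∑ k : Fin (Nat.card A), ZMod.stdAddChar (y * w ^ (k : ℕ)) := by
  obtain ⟨u, rfl⟩ := A.isCyclic_iff_exists_zpowers_eq_top.1 ‹_›
  rw [Nat.card_zpowers]
  have hu : IsPrimitiveRoot (u : ZMod n) (orderOf u) :=
    IsPrimitiveRoot.coe_units_iff.2 (.orderOf u)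
  have hinj : Function.Injective fun k : Fin (orderOf u) ↦ (u : ZMod n) ^ (k : ℕ) :=
    fun i j hij ↦ Fin.ext (hu.pow_inj i.is_lt j.is_lt hij)
  refine ⟨u, hu, fun y ↦ ?_⟩
  simp only [superchar_eq_finsum_stdAddChar, unitOrbit_zpowers, mul_one, finsum_mem_range hinj,
    finsum_eq_sum_of_fintype]

end Supercharacter

open Polynomial in
theorem stmt18 (d : ℕ) (hd : 0 < d)
    (b : Fin d → Fin (Nat.totient d) → ℤ)
    (hb : ∀ k : Fin d, (X : ℤ[X]) ^ (k : ℕ) %ₘ Polynomial.cyclotomic d ℤ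
        = ∑ j : Fin (Nat.totient d), Polynomial.C (b k j) * (X : ℤ[X]) ^ (j : ℕ))
    (ε : ℝ) (hε : 0 < ε) :
    ∃ p e : ℕ, p.Prime ∧ Odd p ∧ 0 < e ∧ d ∣ p - 1 ∧
      ∀ A : Subgroup (ZMod (p ^ e))ˣ, Nat.card A = d →
        ∀ z : Fin (Nat.totient d) → ℂ, (∀ j, ‖z j‖ = 1) →
          ∃ y : ZMod (p ^ e),
            ‖(∑ k : Fin d, ∏ j : Fin (Nat.totient d), z j ^ (b k j))
              - superchar (p ^ e) (unitOrbit (p ^ e) A 1) y‖ < ε := by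
  have hcyc := eventually_exists_norm_laurentSum_sub_lt_of_aeval_eq_zero (cyclotomic.monic d ℤ)
    (cyclotomic.irreducible hd).prime (natDegree_cyclotomic d ℤ) b hε
  obtain ⟨p, ⟨hp, hmod⟩, happrox, hp2⟩ := ((Nat.frequently_atTop_modEq_one hd.ne').and_eventually
    (hcyc.and (eventually_gt_atTop 2))).exists
  refine ⟨p, 1, hp, hp.odd_of_ne_two hp2.ne', one_pos,
    (Nat.modEq_iff_dvd' hp.one_le).1 hmod.symm, ?_⟩
  rw [pow_one]
  rintro A rfl z hz
  have : Fact p.Prime := ⟨hp⟩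
  obtain ⟨w, hw, hσ⟩ := exists_isPrimitiveRoot_superchar_eq_sum A
  have hroot : aeval w (cyclotomic (Nat.card A) ℤ) = 0 := by
    rw [aeval_def, ← eval_map, algebraMap_int_eq, map_cyclotomic]
    exact hw.isRoot_cyclotomic hd
  obtain ⟨y, hy⟩ := happrox w hroot z hz
  refine ⟨y, ?_⟩
  simpa only [laurentSum, hσ, pow_eq_sum_of_X_pow_modByMonic_eq hroot (hb _), eq_intCast] using hy
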